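/- Let c ≥ 1, 0 < α < π/2, and 0 ≤ θ < π/2 with cos α + sin²θ < cos²θ. Let H be a (c,α)-fat hexagon contained in a plane π₁ in ℝ³, and let π₂ be a plane making a (dihedral) angle at most θ with π₁. Then the orthogonal projection of H onto π₂ is an injective image of the vertex set forming a hexagon which is (c′,α′)-fat, where c′ = c / cos θ and α′ = arccos((cos α + sin²θ)/cos²θ). -/

import Mathlib

open Real EuclideanGeometry
open scoped RealInnerProductSpace

noncomputable section

abbrev E3 : Type := EuclideanSpace ℝ (Fin 3)

/-- A hexagon in ℝ³, given by its vertices `V 0, …, V 5` listed in cyclic boundary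
order: the vertices are distinct, coplanar, in convex position, and consecutive
vertices are adjacent on the boundary (the segment between them avoids the relative
interior of the hexagon). -/
def IsHexagon (V : Fin 6 → E3) : Prop :=
  Function.Injective V ∧
  Coplanar ℝ (Set.range V) ∧
  (∀ i : Fin 6, V i ∉ convexHull ℝ (V '' {j | j ≠ i})) ∧
  (∀ i : Fin 6,
    openSegment ℝ (V i) (V (i + 1)) ∩
      intrinsicInterior ℝ (convexHull ℝ (Set.range V)) = ∅)

/-- A hexagon is `(c, α)`-fat if the ratio of any two sides lies in `[1/c, c]` and it has
three pairwise non-neighbouring vertices (an alternating triple) whose interior angles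
lie in `[α, π - α]`. -/
def IsFatHexagon (c α : ℝ) (V : Fin 6 → E3) : Prop :=
  IsHexagon V ∧
  (∀ i j : Fin 6, dist (V i) (V (i + 1)) ≤ c * dist (V j) (V (j + 1))) ∧
  ((∀ i : Fin 6, Even (i : ℕ) →
      α ≤ ∠ (V (i - 1)) (V i) (V (i + 1)) ∧ ∠ (V (i - 1)) (V i) (V (i + 1)) ≤ π - α) ∨
   (∀ i : Fin 6, Odd (i : ℕ) →
      α ≤ ∠ (V (i - 1)) (V i) (V (i + 1)) ∧ ∠ (V (i - 1)) (V i) (V (i + 1)) ≤ π - α))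

/-- The (dihedral) angle between two planes in ℝ³ is at most `θ`: some nonzero normal
vectors of the two planes make an angle whose cosine is at least `cos θ` in absolute
value. -/
def PlanesAngleLE (Pl₁ Pl₂ : AffineSubspace ℝ E3) (θ : ℝ) : Prop :=
  ∃ n₁ n₂ : E3, n₁ ≠ 0 ∧ n₂ ≠ 0 ∧
    (∀ w ∈ Pl₁.direction, ⟪n₁, w⟫ = 0) ∧
    (∀ w ∈ Pl₂.direction, ⟪n₂, w⟫ = 0) ∧
    Real.cos θ * (‖n₁‖ * ‖n₂‖) ≤ |⟪n₁, n₂⟫|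

lemma aux_intr (f : E3 →ᵃ[ℝ] E3) (hf : Continuous f) (Pl : AffineSubspace ℝ E3)
    (hinj : Set.InjOn f Pl) (s : Set E3) (hs : s ⊆ Pl) (x : E3) (hx : x ∈ s)
    (h : f x ∈ intrinsicInterior ℝ (f '' s)) : x ∈ intrinsicInterior ℝ s := by
  rw [mem_intrinsicInterior] at h ⊢
  obtain ⟨y, hy, hyx⟩ := h
  have hm : ∀ z : affineSpan ℝ s, f z ∈ affineSpan ℝ (f '' s) := by
    intro z
    rw [← AffineSubspace.map_span]
    exact AffineSubspace.mem_map_of_mem f z.2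
  let g : affineSpan ℝ s → affineSpan ℝ (f '' s) := fun z => ⟨f z, hm z⟩
  have hg : Continuous g := by
    apply Continuous.subtype_mk
    exact hf.comp continuous_subtype_val
  refine ⟨⟨x, subset_affineSpan ℝ s hx⟩, ?_, rfl⟩
  rw [mem_interior]
  refine ⟨g ⁻¹' (interior ((↑) ⁻¹' (f '' s))), ?_, isOpen_interior.preimage hg, ?_⟩
  · intro z hz
    have h1 := interior_subset hz
    obtain ⟨w, hw, hwz⟩ := h1
    have hz' : (z : E3) ∈ Pl := (affineSpan_le.2 hs) z.2
    have : w = z := hinj (hs hw) hz' hwz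
    change (z : E3) ∈ s
    rw [← this]; exact hw
  · have : g ⟨x, subset_affineSpan ℝ s hx⟩ = y := Subtype.ext hyx.symm
    rw [Set.mem_preimage, this]; exact hy

lemma aux_hex (f : E3 →ᵃ[ℝ] E3) (hf : Continuous f) (Pl : AffineSubspace ℝ E3)
    (hinj : Set.InjOn f Pl) (V : Fin 6 → E3) (hV : IsHexagon V) (hm : ∀ i, V i ∈ Pl) :
    IsHexagon (fun i => f (V i)) := by
  obtain ⟨h1, h2, h3, h4⟩ := hV
  have hr : Set.range (fun i => f (V i)) = f '' Set.range V := by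
    rw [← Set.range_comp]; rfl
  have hsub : ∀ s : Set E3, s ⊆ Set.range V → convexHull ℝ s ⊆ Pl := by
    intro s hs
    apply convexHull_min _ Pl.convex
    intro x hx
    obtain ⟨i, rfl⟩ := hs hx
    exact hm i
  refine ⟨fun i j hij => h1 (hinj (hm i) (hm j) hij), ?_, ?_, ?_⟩
  · rw [hr, Coplanar, ← AffineMap.map_vectorSpan]
    exact (rank_map_le _ _).trans h2
  · intro i hi
    apply h3 i
    have : (fun i => f (V i)) '' {j | j ≠ i} = f '' (V '' {j | j ≠ i}) := by
      rw [Set.image_image]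
    rw [this, ← AffineMap.image_convexHull] at hi
    obtain ⟨w, hw, hwi⟩ := hi
    have := hinj (hsub _ (Set.image_subset_range _ _) hw) (hm i) hwi
    rwa [← this]
  · intro i
    rw [hr, ← AffineMap.image_convexHull, Set.eq_empty_iff_forall_notMem]
    rintro x ⟨hx1, hx2⟩
    have hx1' : x ∈ f '' openSegment ℝ (V i) (V (i+1)) := by
      rw [image_openSegment]; exact hx1
    obtain ⟨w, hw, rfl⟩ := hx1'
    have hw' : w ∈ convexHull ℝ (Set.range V) :=
      (convex_convexHull ℝ _).openSegment_subset (subset_convexHull ℝ _ (Set.mem_range_self i))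
        (subset_convexHull ℝ _ (Set.mem_range_self (i + 1))) hw
    have := aux_intr f hf Pl hinj _ (hsub _ subset_rfl) w hw' hx2
    have h5 := h4 i
    rw [Set.eq_empty_iff_forall_notMem] at h5
    exact h5 w ⟨hw, this⟩

/-- The orthogonal projection in terms of a unit normal. -/
lemma aux_proj (K : Submodule ℝ E3) (hK : Module.finrank ℝ K = 2) (n : E3) (hn : ‖n‖ = 1)
    (hnK : ∀ w ∈ K, ⟪n, w⟫ = 0) (u : E3) : K.starProjection u = u - ⟪n, u⟫ • n := by
  have h3 := K.finrank_add_finrank_orthogonal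
  have hE : Module.finrank ℝ E3 = 3 := by simp
  have h1 : Module.finrank ℝ Kᗮ = 1 := by omega
  have hn0 : n ≠ 0 := by rintro rfl; simp at hn
  have hnm : n ∈ Kᗮ := by
    rw [Submodule.mem_orthogonal']; exact hnK
  have hne : (⟨n, hnm⟩ : Kᗮ) ≠ 0 := by
    intro h; exact hn0 (congrArg Subtype.val h)
  obtain ⟨a, ha⟩ := (finrank_eq_one_iff_of_nonzero' _ hne).1 h1
    ⟨u - K.starProjection u, K.sub_starProjection_mem_orthogonal u⟩
  have ha' : a • n = u - K.starProjection u := congrArg Subtype.val ha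
  have h0 : ⟪n, K.starProjection u⟫ = 0 := hnK _ (K.starProjection_apply_mem u)
  have : a = ⟪n, u⟫ := by
    have h := congrArg (fun x => ⟪n, x⟫) ha'
    simp only [inner_smul_right, inner_sub_right, h0, real_inner_self_eq_norm_sq, hn] at h
    linarith
  rw [← this, ha']; abel

lemma aux_inner (n n' w : E3) (hn : ‖n‖ = 1) (hn' : ‖n'‖ = 1) (hw : ⟪n', w⟫ = 0) (θ : ℝ)
    (hθ : 0 ≤ Real.cos θ) (h : Real.cos θ ≤ |⟪n', n⟫|) :
    ⟪n, w⟫ ^ 2 ≤ Real.sin θ ^ 2 * ‖w‖ ^ 2 := by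
  have e : ⟪n, w⟫ = ⟪n - ⟪n', n⟫ • n', w⟫ := by
    rw [inner_sub_left, real_inner_smul_left, hw]; ring
  have e2 : ‖n - ⟪n', n⟫ • n'‖ ^ 2 = 1 - ⟪n', n⟫ ^ 2 := by
    rw [norm_sub_sq_real, norm_smul, real_inner_smul_right, hn, hn', real_inner_comm n' n,
      Real.norm_eq_abs, mul_one, sq_abs]
    ring
  have e3 : Real.cos θ ^ 2 ≤ ⟪n', n⟫ ^ 2 := by
    rw [← sq_abs ⟪n', n⟫]; gcongr
  have e4 := abs_real_inner_le_norm (n - ⟪n', n⟫ • n') w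
  rw [← e] at e4
  have e5 : ⟪n, w⟫ ^ 2 ≤ (‖n - ⟪n', n⟫ • n'‖ * ‖w‖) ^ 2 := by
    rw [← sq_abs]; gcongr
  rw [mul_pow, e2] at e5
  refine e5.trans ?_
  gcongr
  rw [Real.sin_sq]; linarith

lemma aux_angle (α θ : ℝ) (hα₀ : 0 < α) (hα₁ : α < π / 2) (hθ : 0 < Real.cos θ)
    (u v u' v' : E3) (x y : ℝ) (hu : u ≠ 0) (hv : v ≠ 0)
    (hx : x ^ 2 ≤ Real.sin θ ^ 2 * ‖u‖ ^ 2) (hy : y ^ 2 ≤ Real.sin θ ^ 2 * ‖v‖ ^ 2)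
    (huu : Real.cos θ * ‖u‖ ≤ ‖u'‖) (hvv : Real.cos θ * ‖v‖ ≤ ‖v'‖)
    (huv : ⟪u', v'⟫ = ⟪u, v⟫ - x * y)
    (h : α ≤ InnerProductGeometry.angle u v ∧ InnerProductGeometry.angle u v ≤ π - α) :
    Real.arccos ((Real.cos α + Real.sin θ ^ 2) / Real.cos θ ^ 2) ≤
      InnerProductGeometry.angle u' v' ∧
    InnerProductGeometry.angle u' v' ≤
      π - Real.arccos ((Real.cos α + Real.sin θ ^ 2) / Real.cos θ ^ 2) := by
  have hu0 : 0 < ‖u‖ := norm_pos_iff.2 hu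
  have hv0 : 0 < ‖v‖ := norm_pos_iff.2 hv
  have hcα : 0 < Real.cos α := Real.cos_pos_of_mem_Ioo ⟨by linarith [Real.pi_pos], hα₁⟩
  have hc1 : Real.cos (InnerProductGeometry.angle u v) ≤ Real.cos α :=
    Real.cos_le_cos_of_nonneg_of_le_pi hα₀.le (InnerProductGeometry.angle_le_pi _ _) h.1
  have hc2 : -Real.cos α ≤ Real.cos (InnerProductGeometry.angle u v) := by
    rw [← Real.cos_pi_sub]
    exact Real.cos_le_cos_of_nonneg_of_le_pi (InnerProductGeometry.angle_nonneg _ _)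
      (by linarith) h.2
  have hi := InnerProductGeometry.cos_angle_mul_norm_mul_norm u v
  have hp : 0 < ‖u‖ * ‖v‖ := by positivity
  have hA : |⟪u, v⟫| ≤ Real.cos α * (‖u‖ * ‖v‖) := by
    rw [← hi, abs_mul, abs_of_pos hp]
    gcongr
    exact abs_le.2 ⟨hc2, hc1⟩
  have hB : |x * y| ≤ Real.sin θ ^ 2 * (‖u‖ * ‖v‖) := by
    apply abs_le_of_sq_le_sq _ (by positivity)
    calc (x * y) ^ 2 = x ^ 2 * y ^ 2 := by ring
      _ ≤ (Real.sin θ ^ 2 * ‖u‖ ^ 2) * (Real.sin θ ^ 2 * ‖v‖ ^ 2) := by gcongr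
      _ = _ := by ring
  have hC : |⟪u', v'⟫| ≤ (Real.cos α + Real.sin θ ^ 2) * (‖u‖ * ‖v‖) := by
    rw [huv, abs_le]
    rw [abs_le] at hA hB
    constructor <;> linarith [hA.1, hA.2, hB.1, hB.2]
  have hD : Real.cos θ ^ 2 * (‖u‖ * ‖v‖) ≤ ‖u'‖ * ‖v'‖ := by
    calc _ = (Real.cos θ * ‖u‖) * (Real.cos θ * ‖v‖) := by ring
      _ ≤ _ := by gcongr
  have hD0 : 0 < ‖u'‖ * ‖v'‖ := lt_of_lt_of_le (by positivity) hD
  have hE : |⟪u', v'⟫ / (‖u'‖ * ‖v'‖)| ≤ (Real.cos α + Real.sin θ ^ 2) / Real.cos θ ^ 2 := by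
    rw [abs_div, abs_of_pos hD0, div_le_div_iff₀ hD0 (by positivity)]
    calc _ ≤ (Real.cos α + Real.sin θ ^ 2) * (‖u‖ * ‖v‖) * Real.cos θ ^ 2 := by gcongr
      _ = (Real.cos α + Real.sin θ ^ 2) * (Real.cos θ ^ 2 * (‖u‖ * ‖v‖)) := by ring
      _ ≤ _ := by gcongr
  rw [abs_le] at hE
  rw [← Real.arccos_neg]
  exact ⟨Real.antitone_arccos hE.2, Real.antitone_arccos hE.1⟩

theorem stmt9 (c α θ : ℝ) (hc : 1 ≤ c) (hα₀ : 0 < α) (hα₁ : α < π / 2)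
    (hθ₀ : 0 ≤ θ) (hθ₁ : θ < π / 2)
    (hcond : Real.cos α + Real.sin θ ^ 2 < Real.cos θ ^ 2)
    (Pl₁ Pl₂ : AffineSubspace ℝ E3) [Nonempty Pl₁] [Nonempty Pl₂]
    (hPl₁ : Module.finrank ℝ Pl₁.direction = 2)
    (hPl₂ : Module.finrank ℝ Pl₂.direction = 2)
    (hangle : PlanesAngleLE Pl₁ Pl₂ θ)
    (V : Fin 6 → E3) (hV : IsFatHexagon c α V) (hVmem : ∀ i, V i ∈ Pl₁) :
    Function.Injective
      (fun i : Fin 6 => (EuclideanGeometry.orthogonalProjection Pl₂ (V i) : E3)) ∧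
    IsFatHexagon (c / Real.cos θ)
      (Real.arccos ((Real.cos α + Real.sin θ ^ 2) / Real.cos θ ^ 2))
      (fun i : Fin 6 => (EuclideanGeometry.orthogonalProjection Pl₂ (V i) : E3)) := by
  have hcos : 0 < Real.cos θ := Real.cos_pos_of_mem_Ioo ⟨by linarith [Real.pi_pos], hθ₁⟩
  obtain ⟨n₁, n₂, hn₁, hn₂, ho₁, ho₂, hn⟩ := hangle
  have hp₁ : 0 < ‖n₁‖ := norm_pos_iff.2 hn₁
  have hp₂ : 0 < ‖n₂‖ := norm_pos_iff.2 hn₂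
  set m : E3 := ‖n₁‖⁻¹ • n₁ with hm
  set n : E3 := ‖n₂‖⁻¹ • n₂ with hnn
  have hm1 : ‖m‖ = 1 := norm_smul_inv_norm (𝕜 := ℝ) hn₁
  have hn1 : ‖n‖ = 1 := norm_smul_inv_norm (𝕜 := ℝ) hn₂
  have hmo : ∀ w ∈ Pl₁.direction, ⟪m, w⟫ = 0 := fun w hw => by
    rw [hm, real_inner_smul_left, ho₁ w hw, mul_zero]
  have hno : ∀ w ∈ Pl₂.direction, ⟪n, w⟫ = 0 := fun w hw => by
    rw [hnn, real_inner_smul_left, ho₂ w hw, mul_zero]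
  have hmn : Real.cos θ ≤ |⟪m, n⟫| := by
    rw [hm, hnn, real_inner_smul_left, real_inner_smul_right, abs_mul, abs_mul,
      abs_of_pos (inv_pos.2 hp₁), abs_of_pos (inv_pos.2 hp₂), ← mul_assoc, ← mul_inv,
      inv_mul_eq_div, le_div_iff₀ (by positivity)]
    exact hn
  let f : E3 →ᵃ[ℝ] E3 :=
    Pl₂.subtype.comp (EuclideanGeometry.orthogonalProjection Pl₂ : E3 →ᵃ[ℝ] Pl₂)
  have hfc : Continuous f :=
    continuous_subtype_val.comp (EuclideanGeometry.orthogonalProjection Pl₂).continuous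
  have hsub : ∀ x y, f x - f y = (x - y) - ⟪n, x - y⟫ • n := by
    intro x y
    rw [← aux_proj Pl₂.direction hPl₂ n hn1 hno]
    have := f.linearMap_vsub x y
    simp only [vsub_eq_sub] at this
    rw [← this]
    rfl
  have hip : ∀ u v : E3, ⟪u - ⟪n, u⟫ • n, v - ⟪n, v⟫ • n⟫ = ⟪u, v⟫ - ⟪n, u⟫ * ⟪n, v⟫ := by
    intro u v
    simp only [inner_sub_left, inner_sub_right, real_inner_smul_left, real_inner_smul_right,
      real_inner_self_eq_norm_sq, hn1, real_inner_comm n u]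
    ring
  have hdir : ∀ x ∈ Pl₁, ∀ y ∈ Pl₁, x - y ∈ Pl₁.direction := fun x hx y hy =>
    AffineSubspace.vsub_mem_direction hx hy
  have hin : ∀ x ∈ Pl₁, ∀ y ∈ Pl₁, ⟪n, x - y⟫ ^ 2 ≤ Real.sin θ ^ 2 * ‖x - y‖ ^ 2 :=
    fun x hx y hy => aux_inner n m _ hn1 hm1 (hmo _ (hdir x hx y hy)) θ hcos.le hmn
  have hnsq : ∀ x y, ‖f x - f y‖ ^ 2 = ‖x - y‖ ^ 2 - ⟪n, x - y⟫ ^ 2 := by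
    intro x y
    rw [← real_inner_self_eq_norm_sq, hsub, hip, real_inner_self_eq_norm_sq]; ring
  have hup : ∀ x y, ‖f x - f y‖ ≤ ‖x - y‖ := by
    intro x y
    apply le_of_sq_le_sq _ (norm_nonneg _)
    rw [hnsq]; nlinarith [sq_nonneg ⟪n, x - y⟫]
  have hlow : ∀ x ∈ Pl₁, ∀ y ∈ Pl₁, Real.cos θ * ‖x - y‖ ≤ ‖f x - f y‖ := by
    intro x hx y hy
    apply le_of_sq_le_sq _ (norm_nonneg _)
    rw [hnsq, mul_pow, Real.cos_sq']
    linarith [hin x hx y hy]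
  have hinj : Set.InjOn f Pl₁ := by
    intro x hx y hy hxy
    have h := hlow x hx y hy
    rw [hxy, sub_self, norm_zero] at h
    have h2 : ‖x - y‖ ≤ 0 := by
      by_contra h3
      push Not at h3
      nlinarith [mul_pos hcos h3]
    exact sub_eq_zero.1 (norm_le_zero_iff.1 h2)
  obtain ⟨hH, hr, ha⟩ := hV
  have hH' := aux_hex f hfc Pl₁ hinj V hH hVmem
  have hang : ∀ i : Fin 6, (α ≤ ∠ (V (i - 1)) (V i) (V (i + 1)) ∧
      ∠ (V (i - 1)) (V i) (V (i + 1)) ≤ π - α) →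
      (Real.arccos ((Real.cos α + Real.sin θ ^ 2) / Real.cos θ ^ 2) ≤
        ∠ (f (V (i - 1))) (f (V i)) (f (V (i + 1))) ∧
      ∠ (f (V (i - 1))) (f (V i)) (f (V (i + 1))) ≤
        π - Real.arccos ((Real.cos α + Real.sin θ ^ 2) / Real.cos θ ^ 2)) := by
    intro i h
    have hne1 : V (i - 1) - V i ≠ 0 := by
      intro h0
      have := hH.1 (sub_eq_zero.1 h0)
      clear h h0
      revert i; decide
    have hne2 : V (i + 1) - V i ≠ 0 := by
      intro h0
      have := hH.1 (sub_eq_zero.1 h0)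
      clear h h0 hne1
      revert i; decide
    refine aux_angle α θ hα₀ hα₁ hcos (V (i - 1) - V i) (V (i + 1) - V i) _ _
      _ _ hne1 hne2 (hin _ (hVmem _) _ (hVmem _)) (hin _ (hVmem _) _ (hVmem _))
      (hlow _ (hVmem _) _ (hVmem _)) (hlow _ (hVmem _) _ (hVmem _)) ?_ h
    rw [vsub_eq_sub, vsub_eq_sub, hsub, hsub, hip]
  refine ⟨hH'.1, hH', ?_, ?_⟩
  · intro i j
    change dist (f (V i)) (f (V (i + 1))) ≤ c / Real.cos θ * dist (f (V j)) (f (V (j + 1)))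
    have h1 := hr i j
    have h2 := hup (V i) (V (i + 1))
    have h3 := hlow _ (hVmem j) _ (hVmem (j + 1))
    simp only [dist_eq_norm] at h1 ⊢
    rw [div_mul_eq_mul_div, le_div_iff₀ hcos]
    calc _ ≤ (c * ‖V j - V (j + 1)‖) * Real.cos θ := by
          gcongr; exact h2.trans h1
      _ = c * (Real.cos θ * ‖V j - V (j + 1)‖) := by ring
      _ ≤ _ := by gcongr
  · exact ha.imp (fun h i hi => hang i (h i hi)) (fun h i hi => hang i (h i hi))
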